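/- arXiv:1312.4377 — 3 statements merged into one kernel-verified Lean document; each statement's English description precedes it below -/
import Mathlib

section
/- If f : [0,∞) → [0,∞) is ultrametric-preserving and subadditive, then f is metric-preserving. -/
def IsMetric {X : Type*} (d : X → X → ℝ) : Prop :=
  (∀ x y, 0 ≤ d x y) ∧ (∀ x y, d x y = 0 ↔ x = y) ∧
  (∀ x y, d x y = d y x) ∧ (∀ x y z, d x y ≤ d x z + d z y)

def IsUltrametric {X : Type*} (d : X → X → ℝ) : Prop :=
  (∀ x y, 0 ≤ d x y) ∧ (∀ x y, d x y = 0 ↔ x = y) ∧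
  (∀ x y, d x y = d y x) ∧ (∀ x y z, d x y ≤ max (d x z) (d z y))

def MetricPreserving (f : ℝ → ℝ) : Prop :=
  ∀ (X : Type) (d : X → X → ℝ), IsMetric d → IsMetric fun x y => f (d x y)

def UltrametricPreserving (f : ℝ → ℝ) : Prop :=
  ∀ (X : Type) (d : X → X → ℝ), IsUltrametric d → IsUltrametric fun x y => f (d x y)

def MetricUltrametricPreserving (f : ℝ → ℝ) : Prop :=
  ∀ (X : Type) (d : X → X → ℝ), IsMetric d → IsUltrametric fun x y => f (d x y)

def UltrametricMetricPreserving (f : ℝ → ℝ) : Prop :=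
  ∀ (X : Type) (d : X → X → ℝ), IsUltrametric d → IsMetric fun x y => f (d x y)

def Amenable (f : ℝ → ℝ) : Prop :=
  ∀ x, 0 ≤ x → (f x = 0 ↔ x = 0)

open Set
open scoped NNReal

/-- The distance for which distinct points `x ≠ y` are `max (w x) (w y)` apart, where `w` is a
weight function. A point of weight `0` and two further points of weights `a < b` form a triangle
with sides `a`, `b`, `b`; if `f` preserves ultrametrics, its image has sides `f a`, `f b`, `f b`,
which forces `f a ≤ f b`. -/
def maxDist {X : Type*} [DecidableEq X] (w : X → ℝ) (x y : X) : ℝ :=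
  if x = y then 0 else max (w x) (w y)

section maxDist

variable {X : Type*} [DecidableEq X] {w : X → ℝ} {x y : X}

theorem maxDist_self (w : X → ℝ) (x : X) : maxDist w x x = 0 :=
  if_pos rfl

theorem maxDist_of_ne (w : X → ℝ) (h : x ≠ y) : maxDist w x y = max (w x) (w y) :=
  if_neg h

theorem maxDist_nonneg (hw : ∀ x, 0 ≤ w x) (x y : X) : 0 ≤ maxDist w x y := by
  unfold maxDist
  split_ifs
  · exact le_rfl
  · exact le_max_of_le_left (hw x)

theorem maxDist_comm (w : X → ℝ) (x y : X) : maxDist w x y = maxDist w y x := by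
  simp only [maxDist, eq_comm, max_comm]

theorem maxDist_eq_zero_iff (hw : ∀ x, 0 ≤ w x) (hw₀ : {x | w x = 0}.Subsingleton) :
    maxDist w x y = 0 ↔ x = y := by
  refine ⟨fun h => ?_, fun h => h ▸ maxDist_self w x⟩
  by_contra hne
  rw [maxDist_of_ne w hne] at h
  have hx : w x = 0 := (h ▸ le_max_left (w x) (w y)).antisymm (hw x)
  have hy : w y = 0 := (h ▸ le_max_right (w x) (w y)).antisymm (hw y)
  exact hne (hw₀ hx hy)

theorem maxDist_le_max (hw : ∀ x, 0 ≤ w x) (x y z : X) :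
    maxDist w x y ≤ max (maxDist w x z) (maxDist w z y) := by
  rcases eq_or_ne x z with rfl | hxz
  · exact le_max_right _ _
  rcases eq_or_ne z y with rfl | hzy
  · exact le_max_left _ _
  rcases eq_or_ne x y with rfl | hxy
  · rw [maxDist_self]
    exact le_max_of_le_left (maxDist_nonneg hw x z)
  rw [maxDist_of_ne w hxy, maxDist_of_ne w hxz, maxDist_of_ne w hzy]
  exact max_le_max (le_max_left _ _) (le_max_right _ _)

theorem isUltrametric_maxDist (hw : ∀ x, 0 ≤ w x) (hw₀ : {x | w x = 0}.Subsingleton) :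
    IsUltrametric (maxDist w) :=
  ⟨maxDist_nonneg hw, fun _ _ => maxDist_eq_zero_iff hw hw₀, maxDist_comm w, maxDist_le_max hw⟩

theorem maxDist_of_eq_zero_left (hx : w x = 0) (hy : 0 ≤ w y) : maxDist w x y = w y := by
  rcases eq_or_ne x y with rfl | hxy
  · rw [maxDist_self, hx]
  · rw [maxDist_of_ne w hxy, hx, max_eq_right hy]

end maxDist

namespace UltrametricPreserving

variable {f : ℝ → ℝ}

theorem isUltrametric_comp_maxDist_coe (hf : UltrametricPreserving f) :
    IsUltrametric fun x y : ℝ≥0 => f (maxDist (↑) x y) :=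
  hf ℝ≥0 _ <| isUltrametric_maxDist NNReal.coe_nonneg fun _ hx _ hy =>
    NNReal.coe_injective (hx.trans hy.symm)

theorem amenable (hf : UltrametricPreserving f) : Amenable f := by
  intro a ha
  lift a to ℝ≥0 using ha
  obtain ⟨-, eq_zero_iff, -, -⟩ := hf.isUltrametric_comp_maxDist_coe
  have h : f (maxDist (↑) 0 a) = 0 ↔ 0 = a := eq_zero_iff 0 a
  rw [maxDist_of_eq_zero_left NNReal.coe_zero a.coe_nonneg] at h
  rw [h, NNReal.coe_eq_zero, eq_comm]

theorem monotoneOn (hf : UltrametricPreserving f) : MonotoneOn f (Ici 0) := by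
  intro a ha b hb hab
  lift a to ℝ≥0 using ha
  lift b to ℝ≥0 using hb
  rcases hab.eq_or_lt with hab | hab
  · rw [hab]
  have dist_zero (x : ℝ≥0) : maxDist (↑) 0 x = (x : ℝ) :=
    maxDist_of_eq_zero_left NNReal.coe_zero x.coe_nonneg
  have dist_ba : maxDist (↑) b a = (b : ℝ) := by
    rw [maxDist_of_ne _ (NNReal.coe_lt_coe.mp hab).ne', max_eq_left hab.le]
  obtain ⟨-, -, -, triangle⟩ := hf.isUltrametric_comp_maxDist_coe
  have h : f (maxDist (↑) 0 a) ≤ max (f (maxDist (↑) 0 b)) (f (maxDist (↑) b a)) :=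
    triangle 0 a b
  rwa [dist_zero, dist_zero, dist_ba, max_self] at h

end UltrametricPreserving

theorem IsMetric.comp_of_monotoneOn_of_subadditive {X : Type*} {d : X → X → ℝ} (hd : IsMetric d)
    {f : ℝ → ℝ} (ham : Amenable f) (hmono : MonotoneOn f (Ici 0))
    (hsub : ∀ a b : ℝ, 0 ≤ a → 0 ≤ b → f (a + b) ≤ f a + f b) :
    IsMetric fun x y => f (d x y) := by
  obtain ⟨nonneg, eq_zero_iff, symm, triangle⟩ := hd
  have f_zero : f 0 = 0 := (ham 0 le_rfl).mpr rfl
  refine ⟨fun x y => ?_, fun x y => ?_, fun x y => congrArg f (symm x y), fun x y z => ?_⟩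
  · exact f_zero.ge.trans (hmono self_mem_Ici (nonneg x y) (nonneg x y))
  · exact (ham _ (nonneg x y)).trans (eq_zero_iff x y)
  · calc
      f (d x y) ≤ f (d x z + d z y) :=
        hmono (nonneg x y) (add_nonneg (nonneg x z) (nonneg z y)) (triangle x y z)
      _ ≤ f (d x z) + f (d z y) := hsub _ _ (nonneg x z) (nonneg z y)

theorem stmt6 (f : ℝ → ℝ) (hf : ∀ x, 0 ≤ x → 0 ≤ f x)
    (hup : UltrametricPreserving f)
    (hsub : ∀ a b : ℝ, 0 ≤ a → 0 ≤ b → f (a + b) ≤ f a + f b) :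
    MetricPreserving f := by
  intro X d hd
  exact hd.comp_of_monotoneOn_of_subadditive hup.amenable hup.monotoneOn hsub
end

section
/- Let f : [0,∞) → [0,∞) be metric-ultrametric-preserving. Then for every metric space (X,d), the metric f∘d is uniformly discrete: there exists ε > 0 such that for every x ∈ X, the open ball of radius ε around x in the metric f∘d equals {x}. -/
/-!
A triangle with legs `a` and base `b` exists in the plane with the sup norm as soon as `b ≤ 2 * a`,
and the ultrametric inequality applied to it gives `f b ≤ f a`. Doubling `a` repeatedly removes the
restriction on `b`, so `f` is constant on `(0, ∞)` and every `f ∘ d` is a multiple of the discrete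
metric; the multiple `f 1` is a radius that works for all spaces at once.
-/

theorem isMetric_dist (X : Type*) [MetricSpace X] : IsMetric (dist : X → X → ℝ) :=
  ⟨fun _ _ => dist_nonneg, fun _ _ => dist_eq_zero, dist_comm, fun x y z => dist_triangle x z y⟩

namespace MetricUltrametricPreserving

variable {f : ℝ → ℝ} {a b t : ℝ}

theorem isUltrametric_dist (h : MetricUltrametricPreserving f) (X : Type) [MetricSpace X] :
    IsUltrametric fun x y : X => f (dist x y) :=
  h X dist (isMetric_dist X)

theorem map_nonneg (h : MetricUltrametricPreserving f) (ht : 0 ≤ t) : 0 ≤ f t := by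
  simpa only [Real.dist_0_eq_abs, abs_of_nonneg ht] using (h.isUltrametric_dist ℝ).1 t 0

theorem amenable (h : MetricUltrametricPreserving f) : Amenable f := fun t ht => by
  simpa only [Real.dist_0_eq_abs, abs_of_nonneg ht] using (h.isUltrametric_dist ℝ).2.1 t 0

theorem map_pos (h : MetricUltrametricPreserving f) (ht : 0 < t) : 0 < f t :=
  (h.map_nonneg ht.le).lt_of_ne' (mt (h.amenable t ht.le).1 ht.ne')

theorem map_le_map_of_le_two_mul (h : MetricUltrametricPreserving f) (hb : 0 ≤ b)
    (hba : b ≤ 2 * a) : f b ≤ f a := by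
  have ha : 0 ≤ a := by linarith
  have hmid : |b / 2| ≤ a := by rw [abs_of_nonneg (by positivity)]; linarith
  have base : dist ((0, 0) : ℝ × ℝ) (b, 0) = b := by
    simp [Prod.dist_eq, abs_of_nonneg hb, hb]
  have left_leg : dist ((0, 0) : ℝ × ℝ) (b / 2, a) = a := by
    rw [Prod.dist_eq, dist_zero_left, dist_zero_left, Real.norm_eq_abs, Real.norm_of_nonneg ha,
      max_eq_right hmid]
  have right_leg : dist ((b / 2, a) : ℝ × ℝ) (b, 0) = a := by
    rw [Prod.dist_eq, dist_zero_right, Real.norm_of_nonneg ha, dist_comm, Real.dist_eq, sub_half,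
      max_eq_right hmid]
  simpa only [base, left_leg, right_leg, max_self] using
    (h.isUltrametric_dist (ℝ × ℝ)).2.2.2 (0, 0) (b, 0) (b / 2, a)

theorem map_two_pow_mul_le (h : MetricUltrametricPreserving f) (ha : 0 ≤ a) (n : ℕ) :
    f (2 ^ n * a) ≤ f a := by
  induction n with
  | zero => simp
  | succ n ih =>
    have hdouble : (2 : ℝ) ^ (n + 1) * a ≤ 2 * (2 ^ n * a) := by rw [pow_succ', mul_assoc]
    exact (h.map_le_map_of_le_two_mul (by positivity) hdouble).trans ih

theorem map_le_map_of_pos (h : MetricUltrametricPreserving f) (ha : 0 < a) (hb : 0 ≤ b) :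
    f b ≤ f a := by
  obtain ⟨n, hn⟩ := pow_unbounded_of_one_lt (b / a) one_lt_two
  have hba : b < 2 ^ n * a := (div_lt_iff₀ ha).1 hn
  calc
    f b ≤ f (2 ^ n * a) := h.map_le_map_of_le_two_mul hb (by linarith)
    _ ≤ f a := h.map_two_pow_mul_le ha.le n

theorem map_eq_map_of_pos (h : MetricUltrametricPreserving f) (ha : 0 < a) (hb : 0 < b) :
    f a = f b :=
  (h.map_le_map_of_pos hb ha.le).antisymm (h.map_le_map_of_pos ha hb.le)

theorem map_lt_map_one_iff (h : MetricUltrametricPreserving f) (ht : 0 ≤ t) :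
    f t < f 1 ↔ t = 0 := by
  rcases ht.eq_or_lt with rfl | hpos
  · simpa only [(h.amenable 0 le_rfl).2 rfl, iff_true] using h.map_pos one_pos
  · simp only [h.map_eq_map_of_pos hpos one_pos, lt_irrefl, hpos.ne']

end MetricUltrametricPreserving

theorem stmt13_general {f : ℝ → ℝ} (h : MetricUltrametricPreserving f) :
    ∃ ε : ℝ, 0 < ε ∧ ∀ (X : Type*) (d : X → X → ℝ),
      (∀ x y, 0 ≤ d x y) → (∀ x y, d x y = 0 ↔ x = y) →
        ∀ x : X, {y : X | f (d x y) < ε} = {x} := by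
  refine ⟨f 1, h.map_pos one_pos, fun X d hnonneg hzero x => Set.ext fun y => ?_⟩
  calc
    f (d x y) < f 1 ↔ d x y = 0 := h.map_lt_map_one_iff (hnonneg x y)
    _ ↔ x = y := hzero x y
    _ ↔ y ∈ ({x} : Set X) := eq_comm

theorem stmt13 (f : ℝ → ℝ) (hf : ∀ x, 0 ≤ x → 0 ≤ f x)
    (h : MetricUltrametricPreserving f) :
    ∀ (X : Type) (d : X → X → ℝ), IsMetric d →
      ∃ ε : ℝ, 0 < ε ∧ ∀ x : X, {y : X | f (d x y) < ε} = {x} := by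
  obtain ⟨ε, hε, hball⟩ := stmt13_general h
  exact fun X d hd => ⟨ε, hε, hball X d hd.1 hd.2.1⟩
end

section
/- Let f : [0,∞) → [0,∞) be amenable. Then f is metric-preserving if and only if for every triangle triplet (a,b,c), we have f(a) ≤ f(b) + f(c). -/
/-!
Three points of a metric space have pairwise distances forming a triangle triplet, so the
inequality on triplets gives the triangle inequality for `f ∘ d`. Conversely, every triangle
triplet `(a, b, c)` is realised by the points `(0, a)`, `(a, 0)`, `(b, c)` of the plane with the
sup metric: this is the Kuratowski embedding of a three-point space, by the distances to two of its
points. The triangle inequality for `f ∘ dist` there is the inequality on triplets. Amenability of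
a metric-preserving function is read off from the real line, and the triplets `(0, x, x)` give the
nonnegativity of `f`.
-/

/-- A triangle triplet: three nonnegative reals, each at most the sum of the other two. These
are the possible triples of distances between three points of a metric space. -/
def IsTriangleTriplet (a b c : ℝ) : Prop :=
  0 ≤ a ∧ 0 ≤ b ∧ 0 ≤ c ∧ a ≤ b + c ∧ b ≤ c + a ∧ c ≤ a + b

theorem isTriangleTriplet_zero_self_self {x : ℝ} (hx : 0 ≤ x) : IsTriangleTriplet 0 x x :=
  ⟨le_rfl, hx, hx, add_nonneg hx hx, (add_zero x).ge, (zero_add x).ge⟩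

theorem IsTriangleTriplet.exists_dist_eq {a b c : ℝ} (h : IsTriangleTriplet a b c) :
    ∃ x y z : ℝ × ℝ, dist x y = a ∧ dist x z = b ∧ dist z y = c := by
  obtain ⟨ha, hb, hc, hab, hbc, hca⟩ := h
  have hac_b : |a - c| ≤ b := abs_sub_le_iff.2 ⟨by linarith, by linarith⟩
  have hba_c : |b - a| ≤ c := abs_sub_le_iff.2 ⟨by linarith, by linarith⟩
  refine ⟨(0, a), (a, 0), (b, c), ?_, ?_, ?_⟩
  · simp [Prod.dist_eq, Real.dist_eq, abs_of_nonneg ha]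
  · simpa [Prod.dist_eq, Real.dist_eq, abs_of_nonneg hb] using hac_b
  · simpa [Prod.dist_eq, Real.dist_eq, abs_of_nonneg hc] using hba_c

theorem IsMetric.isTriangleTriplet {X : Type*} {d : X → X → ℝ} (hd : IsMetric d) (x y z : X) :
    IsTriangleTriplet (d x y) (d x z) (d z y) := by
  obtain ⟨nonneg, -, symm, triangle⟩ := hd
  refine ⟨nonneg x y, nonneg x z, nonneg z y, triangle x y z, ?_, ?_⟩
  · calc d x z ≤ d x y + d y z := triangle x z y
      _ = d z y + d x y := by rw [symm y z, add_comm]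
  · calc d z y ≤ d z x + d x y := triangle z y x
      _ = d x y + d x z := by rw [symm z x, add_comm]

theorem MetricPreserving.amenable {f : ℝ → ℝ} (hf : MetricPreserving f) : Amenable f := by
  intro x hx
  have hf_dist : f (dist x 0) = 0 ↔ x = 0 := (hf ℝ dist (isMetric_dist ℝ)).2.1 x 0
  rwa [Real.dist_0_eq_abs, abs_of_nonneg hx] at hf_dist

theorem MetricPreserving.le_add {f : ℝ → ℝ} (hf : MetricPreserving f) {a b c : ℝ}
    (h : IsTriangleTriplet a b c) : f a ≤ f b + f c := by
  obtain ⟨x, y, z, rfl, rfl, rfl⟩ := h.exists_dist_eq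
  exact (hf (ℝ × ℝ) dist (isMetric_dist _)).2.2.2 x y z

theorem nonneg_of_forall_isTriangleTriplet {f : ℝ → ℝ} (hf0 : 0 ≤ f 0)
    (hf : ∀ a b c, IsTriangleTriplet a b c → f a ≤ f b + f c) {x : ℝ} (hx : 0 ≤ x) : 0 ≤ f x := by
  have hf0_le : f 0 ≤ f x + f x := hf 0 x x (isTriangleTriplet_zero_self_self hx)
  linarith

theorem IsMetric.comp_of_forall_isTriangleTriplet {X : Type*} {d : X → X → ℝ} (hd : IsMetric d)
    {f : ℝ → ℝ} (hamen : Amenable f)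
    (hf : ∀ a b c, IsTriangleTriplet a b c → f a ≤ f b + f c) :
    IsMetric fun x y => f (d x y) := by
  have hf0 : f 0 = 0 := (hamen 0 le_rfl).2 rfl
  have triangle (x y z : X) : f (d x y) ≤ f (d x z) + f (d z y) :=
    hf _ _ _ (hd.isTriangleTriplet x y z)
  obtain ⟨nonneg, eq_zero_iff, symm, -⟩ := hd
  exact ⟨fun x y => nonneg_of_forall_isTriangleTriplet hf0.ge hf (nonneg x y),
    fun x y => (hamen _ (nonneg x y)).trans (eq_zero_iff x y),
    fun x y => congrArg f (symm x y), triangle⟩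

theorem stmt14_general (f : ℝ → ℝ) :
    MetricPreserving f ↔
      Amenable f ∧ ∀ a b c, IsTriangleTriplet a b c → f a ≤ f b + f c :=
  ⟨fun hf => ⟨hf.amenable, fun _ _ _ => hf.le_add⟩,
    fun ⟨hamen, hf⟩ _ _ hd => hd.comp_of_forall_isTriangleTriplet hamen hf⟩

theorem stmt14 (f : ℝ → ℝ) (hf : ∀ x, 0 ≤ x → 0 ≤ f x)
    (hamen : Amenable f) :
    MetricPreserving f ↔
      ∀ a b c : ℝ, 0 ≤ a → 0 ≤ b → 0 ≤ c →
        a ≤ b + c → b ≤ c + a → c ≤ a + b → f a ≤ f b + f c := by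
  simpa only [hamen, true_and, IsTriangleTriplet, and_imp] using stmt14_general f
end
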